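/- arXiv:1901.02179 — 2 statements merged into one kernel-verified Lean document; each statement's English description precedes it below -/
import Mathlib

section
/- (Lemma 5.1(iii)) For every p ∈ {1,…,m}: { ⟨Q^p, X⟩ : X ∈ Γ^A, ⟨Q^i, X⟩ = 0 (i = 1,…,p−1), ⟨H^0, X⟩ = 1 } = { f_p(w) : w ∈ S_{p−1} }. In particular ζ(Γ^A ∩ J_{p−1}, Q^p, 1) := inf{ ⟨Q^p, X⟩ : X ∈ Γ^A ∩ J_{p−1}, ⟨H^0, X⟩ = 1 } equals inf{ f_p(w) : w ∈ S_{p−1} } (infima in the extended reals). -/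
open MvPolynomial

noncomputable section

open scoped Classical

variable {n : ℕ}

/-- The vector `u^A(x)` of monomials `x^α` for `α ∈ A`. -/
def uA (A : Finset (Fin (n+1) →₀ ℕ)) (x : Fin (n+1) → ℝ) (a : A) : ℝ :=
  ∏ i, x i ^ (a : Fin (n+1) →₀ ℕ) i

/-- The rank-one moment matrix `u^A(x) u^A(x)ᵀ`. -/
def momMat (A : Finset (Fin (n+1) →₀ ℕ)) (x : Fin (n+1) → ℝ) : Matrix A A ℝ :=
  fun a b => uA A x a * uA A x b

/-- The cone `Γ^A = { u^A(x) u^A(x)ᵀ : x ∈ ℝ^{1+n}, x ≥ 0 }`. -/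
def GammaA (A : Finset (Fin (n+1) →₀ ℕ)) : Set (Matrix A A ℝ) :=
  { X | ∃ x : Fin (n+1) → ℝ, (∀ i, 0 ≤ x i) ∧ X = momMat A x }

/-- The extended completely positive cone `CPP^A = conv Γ^A`. -/
def CPPA (A : Finset (Fin (n+1) →₀ ℕ)) : Set (Matrix A A ℝ) :=
  convexHull ℝ (GammaA A)

/-- The trace inner product `⟨P, X⟩ = Σ_{a,b} P_{ab} X_{ab}`. -/
def ip {A : Finset (Fin (n+1) →₀ ℕ)} (P X : Matrix A A ℝ) : ℝ :=
  ∑ a : A, ∑ b : A, P a b * X a b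

/-- The matrix `H^0` whose `(α^ω, α^ω)` entry is `1` and all other entries are `0`. -/
def H0mat (A : Finset (Fin (n+1) →₀ ℕ)) (ω : ℕ) : Matrix A A ℝ :=
  fun a b =>
    if (a : Fin (n+1) →₀ ℕ) = Finsupp.single 0 ω ∧ (b : Fin (n+1) →₀ ℕ) = Finsupp.single 0 ω
    then 1 else 0

/-- `J_p = { X ∈ CPP^A : ⟨Q^i, X⟩ = 0 (i = 1,…,p) }`. -/
def Jset (A : Finset (Fin (n+1) →₀ ℕ)) (Q : ℕ → Matrix A A ℝ) (p : ℕ) :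
    Set (Matrix A A ℝ) :=
  { X ∈ CPPA A | ∀ i, 1 ≤ i → i ≤ p → ip (Q i) X = 0 }

/-- `S̄_p = { x ∈ ℝ^{1+n}_+ : f̄_i(x) = 0 (i = 1,…,p) }`. -/
def Sbar (fb : ℕ → MvPolynomial (Fin (n+1)) ℝ) (p : ℕ) : Set (Fin (n+1) → ℝ) :=
  { x | (∀ j, 0 ≤ x j) ∧ ∀ i, 1 ≤ i → i ≤ p → eval x (fb i) = 0 }

/-- `S̃_p = { w ∈ ℝ^n_+ : f̄_i(0, w) = 0 (i = 1,…,p) }`. -/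
def Stilde (fb : ℕ → MvPolynomial (Fin (n+1)) ℝ) (p : ℕ) : Set (Fin n → ℝ) :=
  { w | (∀ j, 0 ≤ w j) ∧ ∀ i, 1 ≤ i → i ≤ p → eval (Fin.cons 0 w) (fb i) = 0 }

/-- `S_p = { w ∈ ℝ^n_+ : f_i(w) = 0 (i = 1,…,p) }`. -/
def Sset (f : ℕ → MvPolynomial (Fin n) ℝ) (p : ℕ) : Set (Fin n → ℝ) :=
  { w | (∀ j, 0 ≤ w j) ∧ ∀ i, 1 ≤ i → i ≤ p → eval w (f i) = 0 }

/-- Infimum of a set of reals, taken in the extended reals. -/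
def erInf (s : Set ℝ) : EReal := sInf ((fun r : ℝ => (r : EReal)) '' s)

/-- `F` is a face of the convex set `C`. -/
def IsFace {V : Type*} [AddCommGroup V] [Module ℝ V] (C F : Set V) : Prop :=
  F ⊆ C ∧ Convex ℝ F ∧
    ∀ y ∈ C, ∀ z ∈ C, ∀ t : ℝ, 0 < t → t < 1 → (1 - t) • y + t • z ∈ F → y ∈ F ∧ z ∈ F

theorem ip_H0_momMat {n : ℕ} (A : Finset (Fin (n+1) →₀ ℕ)) (ω : ℕ)
    (hAtop : Finsupp.single (0 : Fin (n+1)) ω ∈ A) (x : Fin (n+1) → ℝ) :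
    ip (H0mat A ω) (momMat A x) = x 0 ^ ω * x 0 ^ ω := by
  have hu : uA A x ⟨_, hAtop⟩ = x 0 ^ ω := by
    unfold uA
    rw [Finset.prod_eq_single (0 : Fin (n+1))]
    · simp
    · intro b _ hb
      simp [Finsupp.single_apply, Ne.symm hb]
    · simp
  unfold ip
  rw [Finset.sum_eq_single (⟨_, hAtop⟩ : A)]
  · rw [Finset.sum_eq_single (⟨_, hAtop⟩ : A)]
    · simp only [H0mat, momMat, hu]
      simp
    · intro b _ hb
      have : (b : Fin (n+1) →₀ ℕ) ≠ Finsupp.single 0 ω := fun h => hb (Subtype.ext h)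
      simp [H0mat, this]
    · simp
  · intro b _ hb
    have : (b : Fin (n+1) →₀ ℕ) ≠ Finsupp.single 0 ω := fun h => hb (Subtype.ext h)
    simp [H0mat, this]
  · simp

theorem stmt11
    (n ω m : ℕ) (hn : 0 < n) (hω : 0 < ω) (hm : 0 < m)
    (A : Finset (Fin (n+1) →₀ ℕ)) (hA : A.Nonempty)
    (hAdeg : ∀ α ∈ A, ∑ i, α i = ω)
    (hAtop : Finsupp.single (0 : Fin (n+1)) ω ∈ A)
    (f : ℕ → MvPolynomial (Fin n) ℝ)
    (fb : ℕ → MvPolynomial (Fin (n+1)) ℝ)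
    (hfdeg : ∀ i ≤ m, (f i).totalDegree ≤ 2 * ω)
    (hfbhom : ∀ i ≤ m, (fb i).IsHomogeneous (2 * ω))
    (hfb1 : ∀ i ≤ m, ∀ w : Fin n → ℝ, eval (Fin.cons 1 w) (fb i) = eval w (f i))
    (Q : ℕ → Matrix A A ℝ)
    (hQsymm : ∀ i ≤ m, (Q i).IsSymm)
    (hQrep : ∀ i ≤ m, ∀ x : Fin (n+1) → ℝ, eval x (fb i) = ip (Q i) (momMat A x))
    :
    ∀ p, 1 ≤ p → p ≤ m →
      ({ y : ℝ | ∃ X ∈ GammaA A, (∀ i, 1 ≤ i → i < p → ip (Q i) X = 0) ∧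
            ip (H0mat A ω) X = 1 ∧ y = ip (Q p) X }
          = { y : ℝ | ∃ w ∈ Sset f (p - 1), y = eval w (f p) }) ∧
      erInf { y : ℝ | ∃ X ∈ GammaA A ∩ Jset A Q (p - 1),
            ip (H0mat A ω) X = 1 ∧ y = ip (Q p) X }
        = erInf { y : ℝ | ∃ w ∈ Sset f (p - 1), y = eval w (f p) } := by
  intro p hp hpm
  have key : { y : ℝ | ∃ X ∈ GammaA A, (∀ i, 1 ≤ i → i < p → ip (Q i) X = 0) ∧
            ip (H0mat A ω) X = 1 ∧ y = ip (Q p) X }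
          = { y : ℝ | ∃ w ∈ Sset f (p - 1), y = eval w (f p) } := by
    ext y
    constructor
    · rintro ⟨X, ⟨x, hx, rfl⟩, hi, h0, rfl⟩
      rw [ip_H0_momMat A ω hAtop, ← pow_add] at h0
      have hx0 : x 0 = 1 := (pow_eq_one_iff_of_nonneg (hx 0) (by omega)).1 h0
      have hxc : x = Fin.cons 1 (Fin.tail x) := by
        rw [← hx0, Fin.cons_self_tail]
      have hev : ∀ i ≤ m, ip (Q i) (momMat A x) = eval (Fin.tail x) (f i) := by
        intro i him
        rw [← hQrep i him, ← hfb1 i him, ← hxc]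
      refine ⟨Fin.tail x, ⟨fun j => hx _, fun i h1 h2 => ?_⟩, hev p hpm⟩
      rw [← hev i (by omega)]
      exact hi i h1 (by omega)
    · rintro ⟨w, ⟨hw, hi⟩, rfl⟩
      have hev : ∀ i ≤ m, ip (Q i) (momMat A (Fin.cons 1 w)) = eval w (f i) := by
        intro i him
        rw [← hQrep i him, ← hfb1 i him]
      refine ⟨momMat A (Fin.cons 1 w), ⟨Fin.cons 1 w, fun i => ?_, rfl⟩, ?_, ?_, (hev p hpm).symm⟩
      · refine Fin.cases ?_ (fun j => ?_) i
        · simp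
        · simpa using hw j
      · intro i h1 h2
        rw [hev i (by omega)]
        exact hi i h1 (by omega)
      · rw [ip_H0_momMat A ω hAtop]
        simp
  refine ⟨key, ?_⟩
  rw [← key]
  congr 1
  ext y
  constructor
  · rintro ⟨X, ⟨hX, hJ⟩, h0, hy⟩
    exact ⟨X, hX, fun i h1 h2 => hJ.2 i h1 (by omega), h0, hy⟩
  · rintro ⟨X, hX, hi, h0, hy⟩
    exact ⟨X, ⟨hX, subset_convexHull ℝ _ hX, fun i h1 h2 => hi i h1 (by omega)⟩, h0, hy⟩
end
end

section
/- (Theorem 5.1(ii)) Let p ∈ {1,…,m}. Assume that J_{p−1} is a face of CPP^A, that f_p(w) ≥ 0 for every w ∈ S_{p−1}, and that f̄_p(0, w) ≥ 0 for every w ∈ S̃_{p−1}. Then J_p is a face of J_{p−1} and a face of CPP^A. -/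
open MvPolynomial

noncomputable section

open scoped Classical

variable {n : ℕ}

theorem ip_comb {A : Finset (Fin (n+1) →₀ ℕ)} (P y z : Matrix A A ℝ) (a b : ℝ) :
    ip P (a • y + b • z) = a * ip P y + b * ip P z := by
  simp only [ip, Finset.mul_sum, ← Finset.sum_add_distrib, Matrix.add_apply, Matrix.smul_apply,
    smul_eq_mul]
  refine Finset.sum_congr rfl fun i _ => Finset.sum_congr rfl fun j _ => ?_
  ring

theorem hom_eval_smul {σ : Type*} {q : MvPolynomial σ ℝ} {k : ℕ} (h : q.IsHomogeneous k)
    (c : ℝ) (x : σ → ℝ) : eval (fun i => c * x i) q = c ^ k * eval x q := by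
  rw [eval_eq, eval_eq, Finset.mul_sum]
  refine Finset.sum_congr rfl fun d hd => ?_
  have hk := h (mem_support_iff.mp hd)
  have : (∏ i ∈ d.support, (c * x i) ^ d i) = c ^ k * ∏ i ∈ d.support, x i ^ d i := by
    simp only [mul_pow, Finset.prod_mul_distrib, Finset.prod_pow_eq_pow_sum]
    congr 2
    rw [← hk, Finsupp.weight_apply, Finsupp.sum]
    simp
  rw [this]; ring

theorem stmt14
    (n ω m : ℕ) (hn : 0 < n) (hω : 0 < ω) (hm : 0 < m)
    (A : Finset (Fin (n+1) →₀ ℕ)) (hA : A.Nonempty)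
    (hAdeg : ∀ α ∈ A, ∑ i, α i = ω)
    (hAtop : Finsupp.single (0 : Fin (n+1)) ω ∈ A)
    (f : ℕ → MvPolynomial (Fin n) ℝ)
    (fb : ℕ → MvPolynomial (Fin (n+1)) ℝ)
    (hfdeg : ∀ i ≤ m, (f i).totalDegree ≤ 2 * ω)
    (hfbhom : ∀ i ≤ m, (fb i).IsHomogeneous (2 * ω))
    (hfb1 : ∀ i ≤ m, ∀ w : Fin n → ℝ, eval (Fin.cons 1 w) (fb i) = eval w (f i))
    (Q : ℕ → Matrix A A ℝ)
    (hQsymm : ∀ i ≤ m, (Q i).IsSymm)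
    (hQrep : ∀ i ≤ m, ∀ x : Fin (n+1) → ℝ, eval x (fb i) = ip (Q i) (momMat A x))
    (p : ℕ) (hp1 : 1 ≤ p) (hpm : p ≤ m)
    (hface : IsFace (CPPA A) (Jset A Q (p - 1)))
    (hpos1 : ∀ w ∈ Sset f (p - 1), 0 ≤ eval w (f p))
    (hpos2 : ∀ w ∈ Stilde fb (p - 1), 0 ≤ eval (Fin.cons 0 w) (fb p)) :
    IsFace (Jset A Q (p - 1)) (Jset A Q p) ∧ IsFace (CPPA A) (Jset A Q p) := by
  have hpos : ∀ x : Fin (n+1) → ℝ, (∀ j, 0 ≤ x j) →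
      (∀ i, 1 ≤ i → i ≤ p - 1 → eval x (fb i) = 0) → 0 ≤ eval x (fb p) := by
    intro x hx hz
    rcases (hx 0).eq_or_lt with h0 | h0
    · have hxe : x = Fin.cons 0 (Fin.tail x) := by
        rw [h0]; exact (Fin.cons_self_tail x).symm
      rw [hxe]
      refine hpos2 _ ⟨fun j => hx _, fun i h1 h2 => ?_⟩
      rw [← hxe]; exact hz i h1 h2
    · have hxe : x = fun i => x 0 *
          (Fin.cons 1 (fun j : Fin n => x j.succ / x 0) : Fin (n+1) → ℝ) i := by
        funext i
        refine Fin.cases ?_ (fun j => ?_) i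
        · simp
        · simp; field_simp
      have key : ∀ i ≤ m, eval x (fb i) =
          x 0 ^ (2 * ω) * eval (fun j : Fin n => x j.succ / x 0) (f i) := by
        intro i hi
        rw [← hfb1 i hi, ← hom_eval_smul (hfbhom i hi), ← hxe]
      rw [key p hpm]
      refine mul_nonneg (by positivity) (hpos1 _ ⟨fun j => div_nonneg (hx _) h0.le, ?_⟩)
      intro i h1 h2
      have := hz i h1 h2
      rw [key i (by omega)] at this
      exact (mul_eq_zero.mp this).resolve_left (by positivity)
  obtain ⟨hsub, hconv, hext⟩ := hface
  have hnn : ∀ X ∈ Jset A Q (p - 1), 0 ≤ ip (Q p) X := by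
    have hC : Convex ℝ {X | X ∈ CPPA A ∧ (X ∈ Jset A Q (p - 1) → 0 ≤ ip (Q p) X)} := by
      rw [convex_iff_forall_pos]
      rintro y ⟨hy, hy'⟩ z ⟨hz, hz'⟩ a b ha hb hab
      refine ⟨convex_convexHull ℝ _ hy hz ha.le hb.le hab, fun hmem => ?_⟩
      obtain rfl : a = 1 - b := by linarith
      obtain ⟨h1, h2⟩ := hext y hy z hz b hb (by linarith) hmem
      rw [ip_comb]
      have := hy' h1
      have := hz' h2
      positivity
    have hG : GammaA A ⊆ {X | X ∈ CPPA A ∧ (X ∈ Jset A Q (p - 1) → 0 ≤ ip (Q p) X)} := by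
      intro X hX
      refine ⟨subset_convexHull ℝ _ hX, fun hJ => ?_⟩
      obtain ⟨x, hx, rfl⟩ := hX
      rw [← hQrep p hpm]
      refine hpos x hx fun i h1 h2 => ?_
      rw [hQrep i (by omega)]
      exact hJ.2 i h1 h2
    intro X hX
    exact (convexHull_min hG hC hX.1).2 hX
  have hJsub : Jset A Q p ⊆ Jset A Q (p - 1) :=
    fun X hX => ⟨hX.1, fun i h1 h2 => hX.2 i h1 (by omega)⟩
  have hJ : ∀ X ∈ Jset A Q (p - 1), ip (Q p) X = 0 → X ∈ Jset A Q p := by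
    intro X hX h0
    refine ⟨hX.1, fun i h1 h2 => ?_⟩
    rcases h2.eq_or_lt with rfl | h
    · exact h0
    · exact hX.2 i h1 (by omega)
  have hJc : Convex ℝ (Jset A Q p) := by
    intro y hy z hz a b ha hb hab
    refine hJ _ (hconv (hJsub hy) (hJsub hz) ha hb hab) ?_
    rw [ip_comb, hy.2 p hp1 le_rfl, hz.2 p hp1 le_rfl]; simp
  have hF : ∀ y ∈ Jset A Q (p - 1), ∀ z ∈ Jset A Q (p - 1), ∀ t : ℝ, 0 < t → t < 1 →
      (1 - t) • y + t • z ∈ Jset A Q p → y ∈ Jset A Q p ∧ z ∈ Jset A Q p := by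
    intro y hy z hz t h0 h1 hmem
    have he := hmem.2 p hp1 le_rfl
    rw [ip_comb] at he
    have hy0 := hnn y hy
    have hz0 := hnn z hz
    have h1' : 0 < 1 - t := by linarith
    have e1 := mul_nonneg h1'.le hy0
    have e2 := mul_nonneg h0.le hz0
    refine ⟨hJ y hy ?_, hJ z hz ?_⟩
    · exact (mul_eq_zero.mp (by linarith : (1 - t) * ip (Q p) y = 0)).resolve_left h1'.ne'
    · exact (mul_eq_zero.mp (by linarith : t * ip (Q p) z = 0)).resolve_left h0.ne'
  refine ⟨⟨hJsub, hJc, hF⟩, hJsub.trans hsub, hJc, ?_⟩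
  intro y hy z hz t h0 h1 hmem
  obtain ⟨h2, h3⟩ := hext y hy z hz t h0 h1 (hJsub hmem)
  exact hF y h2 z h3 t h0 h1 hmem
end
end
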